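/- arXiv:cs/0702099 — 2 statements merged into one kernel-verified Lean document; each statement's English description precedes it below -/
import Mathlib

section
/- Let U, V1, V2, Y1, Y2 be random variables defined on a common finite probability space. Define Δ1 = I(V1;Y1|U) − I(V1;Y2|U), Δ2 = I(V2;Y2|U) − I(V2;Y1|U), Θ1 = I(V1;Y1|V2,U) − I(V1;Y2|V2,U), and Θ2 = I(V2;Y2|V1,U) − I(V2;Y1|V1,U). Then Δ1 + Δ2 = Θ1 + Θ2, and consequently min(Δ1 + Θ2, Δ2 + Θ1) ≤ Δ1 + Δ2. -/
open scoped BigOperators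

open Classical in
/-- Probability mass `P(X = x)` under the weight function `p` on the finite sample space. -/
noncomputable def pm {Ω α : Type*} [Fintype Ω] [Fintype α]
    (p : Ω → ℝ) (X : Ω → α) (x : α) : ℝ :=
  ∑ ω, if X ω = x then p ω else 0

/-- Shannon entropy `H(X)` (with the convention `0 · log 0 = 0`, since `Real.log 0 = 0`). -/
noncomputable def ent {Ω α : Type*} [Fintype Ω] [Fintype α]
    (p : Ω → ℝ) (X : Ω → α) : ℝ :=
  ∑ x, -(pm p X x * Real.log (pm p X x))

/-- Conditional entropy `H(X|Y) = H(X,Y) - H(Y)`. -/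
noncomputable def condEnt {Ω α β : Type*} [Fintype Ω] [Fintype α] [Fintype β]
    (p : Ω → ℝ) (X : Ω → α) (Y : Ω → β) : ℝ :=
  ent p (fun ω => (X ω, Y ω)) - ent p Y

/-- Mutual information `I(X;Y) = H(X) + H(Y) - H(X,Y)`. -/
noncomputable def mutI {Ω α β : Type*} [Fintype Ω] [Fintype α] [Fintype β]
    (p : Ω → ℝ) (X : Ω → α) (Y : Ω → β) : ℝ :=
  ent p X + ent p Y - ent p (fun ω => (X ω, Y ω))

/-- Conditional mutual information `I(X;Y|Z) = H(X|Z) - H(X|(Y,Z))`. -/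
noncomputable def condMutI {Ω α β γ : Type*} [Fintype Ω] [Fintype α] [Fintype β] [Fintype γ]
    (p : Ω → ℝ) (X : Ω → α) (Y : Ω → β) (Z : Ω → γ) : ℝ :=
  condEnt p X Z - condEnt p X (fun ω => (Y ω, Z ω))

/-!
Expanding `I(V1,V2;Y|U)` by the chain rule in both orders gives
`I(V1;Y|U) + I(V2;Y|V1,U) = I(V2;Y|U) + I(V1;Y|V2,U)`; subtracting this for `Y = Y2` from the
same for `Y = Y1` is the identity `Δ1 + Δ2 = Θ1 + Θ2`. Hence `Δ1 + Θ2` and `Δ2 + Θ1` have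
average `Δ1 + Δ2`, and the smaller of them is at most that.
-/

section Entropy

variable {Ω α β γ δ : Type*} [Fintype Ω] [Fintype α] [Fintype β] [Fintype γ] [Fintype δ]
  (p : Ω → ℝ)

theorem pm_eq_zero_of_notMem_range {X : Ω → α} {x : α} (hx : x ∉ Set.range X) :
    pm p X x = 0 :=
  Finset.sum_eq_zero fun ω _ => if_neg fun hω => hx ⟨ω, hω⟩

theorem pm_comp_of_injective (X : Ω → α) {f : α → β} (hf : f.Injective) (x : α) :
    pm p (fun ω => f (X ω)) (f x) = pm p X x := by
  classical exact Finset.sum_congr rfl fun _ _ => if_congr hf.eq_iff rfl rfl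

theorem ent_comp_of_injective (X : Ω → α) {f : α → β} (hf : f.Injective) :
    ent p (fun ω => f (X ω)) = ent p X := by
  refine (Fintype.sum_of_injective f hf _ _ (fun y hy => ?_) fun x => ?_).symm
  · have hy' : y ∉ Set.range fun ω => f (X ω) := fun ⟨ω, hω⟩ => hy ⟨X ω, hω⟩
    rw [pm_eq_zero_of_notMem_range p hy', zero_mul, neg_zero]
  · rw [pm_comp_of_injective p X hf]

theorem condEnt_comp_left_of_injective (X : Ω → α) (Y : Ω → β) {f : α → γ}
    (hf : f.Injective) :
    condEnt p (fun ω => f (X ω)) Y = condEnt p X Y := by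
  have hpair : ent p (fun ω => (f (X ω), Y ω)) = ent p (fun ω => (X ω, Y ω)) :=
    ent_comp_of_injective p (fun ω => (X ω, Y ω)) (hf.prodMap Function.injective_id)
  rw [condEnt, hpair, condEnt]

theorem condEnt_comp_right_of_injective (X : Ω → α) (Y : Ω → β) {f : β → γ}
    (hf : f.Injective) :
    condEnt p X (fun ω => f (Y ω)) = condEnt p X Y := by
  have hpair : ent p (fun ω => (X ω, f (Y ω))) = ent p (fun ω => (X ω, Y ω)) :=
    ent_comp_of_injective p (fun ω => (X ω, Y ω)) (Function.injective_id.prodMap hf)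
  rw [condEnt, hpair, ent_comp_of_injective p Y hf, condEnt]

theorem condMutI_comp_left_of_injective (X : Ω → α) (Y : Ω → β) (Z : Ω → γ) {f : α → δ}
    (hf : f.Injective) :
    condMutI p (fun ω => f (X ω)) Y Z = condMutI p X Y Z := by
  simp only [condMutI, condEnt_comp_left_of_injective p X _ hf]

theorem condEnt_chain_rule (X : Ω → α) (Y : Ω → β) (Z : Ω → γ) :
    condEnt p (fun ω => (X ω, Y ω)) Z
      = condEnt p X Z + condEnt p Y (fun ω => (X ω, Z ω)) := by
  let e : (α × β) × γ ≃ β × α × γ :=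
    ((Equiv.prodComm α β).prodCongr (Equiv.refl γ)).trans (Equiv.prodAssoc β α γ)
  have hent : ent p (fun ω => (Y ω, X ω, Z ω)) = ent p (fun ω => ((X ω, Y ω), Z ω)) :=
    ent_comp_of_injective p (fun ω => ((X ω, Y ω), Z ω)) e.injective
  simp only [condEnt, hent]
  ring

theorem condMutI_chain_rule (X₁ : Ω → α) (X₂ : Ω → β) (Y : Ω → γ) (Z : Ω → δ) :
    condMutI p (fun ω => (X₁ ω, X₂ ω)) Y Z
      = condMutI p X₁ Y Z + condMutI p X₂ Y (fun ω => (X₁ ω, Z ω)) := by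
  let e : γ × α × δ ≃ α × γ × δ :=
    (Equiv.prodAssoc γ α δ).symm.trans
      (((Equiv.prodComm γ α).prodCongr (Equiv.refl δ)).trans (Equiv.prodAssoc α γ δ))
  have hcond : condEnt p X₂ (fun ω => (X₁ ω, Y ω, Z ω))
      = condEnt p X₂ (fun ω => (Y ω, X₁ ω, Z ω)) :=
    condEnt_comp_right_of_injective p X₂ (fun ω => (Y ω, X₁ ω, Z ω)) e.injective
  simp only [condMutI, condEnt_chain_rule, hcond]
  ring

theorem condMutI_add_condMutI_comm (X₁ : Ω → α) (X₂ : Ω → β) (Y : Ω → γ) (Z : Ω → δ) :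
    condMutI p X₁ Y Z + condMutI p X₂ Y (fun ω => (X₁ ω, Z ω))
      = condMutI p X₂ Y Z + condMutI p X₁ Y (fun ω => (X₂ ω, Z ω)) := by
  have hswap : condMutI p (fun ω => (X₁ ω, X₂ ω)) Y Z
      = condMutI p (fun ω => (X₂ ω, X₁ ω)) Y Z :=
    condMutI_comp_left_of_injective p (fun ω => (X₂ ω, X₁ ω)) Y Z (f := Prod.swap)
      Prod.swap_injective
  rw [← condMutI_chain_rule, hswap, condMutI_chain_rule]

end Entropy

theorem sum_rate_bounds_identity_and_min_general
    {Ω αU α1 α2 β1 β2 : Type*} [Fintype Ω] [Fintype αU] [Fintype α1] [Fintype α2]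
    [Fintype β1] [Fintype β2]
    (p : Ω → ℝ) (U : Ω → αU) (V1 : Ω → α1) (V2 : Ω → α2) (Y1 : Ω → β1) (Y2 : Ω → β2) :
    let Δ1 := condMutI p V1 Y1 U - condMutI p V1 Y2 U
    let Δ2 := condMutI p V2 Y2 U - condMutI p V2 Y1 U
    let Θ1 := condMutI p V1 Y1 (fun ω => (V2 ω, U ω))
      - condMutI p V1 Y2 (fun ω => (V2 ω, U ω))
    let Θ2 := condMutI p V2 Y2 (fun ω => (V1 ω, U ω))
      - condMutI p V2 Y1 (fun ω => (V1 ω, U ω))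
    Δ1 + Δ2 = Θ1 + Θ2 ∧ min (Δ1 + Θ2) (Δ2 + Θ1) ≤ Δ1 + Δ2 := by
  intro Δ1 Δ2 Θ1 Θ2
  have hY1 := condMutI_add_condMutI_comm p V1 V2 Y1 U
  have hY2 := condMutI_add_condMutI_comm p V1 V2 Y2 U
  have hsum : Δ1 + Δ2 = Θ1 + Θ2 := by
    simp only [Δ1, Δ2, Θ1, Θ2]
    linarith
  have htotal : (Δ1 + Θ2) + (Δ2 + Θ1) ≤ (Δ1 + Δ2) + (Δ1 + Δ2) := by linarith
  exact ⟨hsum, min_le_iff.mpr (le_or_le_of_add_le_add htotal)⟩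

/-- Lemma 1: `Δ1 + Δ2 = Θ1 + Θ2`, hence `min(Δ1+Θ2, Δ2+Θ1) ≤ Δ1 + Δ2`. -/
theorem sum_rate_bounds_identity_and_min
    {Ω αU α1 α2 β1 β2 : Type*} [Fintype Ω] [Fintype αU] [Fintype α1] [Fintype α2]
    [Fintype β1] [Fintype β2]
    (p : Ω → ℝ) (hp : ∀ ω, 0 ≤ p ω) (hp1 : ∑ ω, p ω = 1)
    (U : Ω → αU) (V1 : Ω → α1) (V2 : Ω → α2) (Y1 : Ω → β1) (Y2 : Ω → β2) :
    let Δ1 := condMutI p V1 Y1 U - condMutI p V1 Y2 U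
    let Δ2 := condMutI p V2 Y2 U - condMutI p V2 Y1 U
    let Θ1 := condMutI p V1 Y1 (fun ω => (V2 ω, U ω))
      - condMutI p V1 Y2 (fun ω => (V2 ω, U ω))
    let Θ2 := condMutI p V2 Y2 (fun ω => (V1 ω, U ω))
      - condMutI p V2 Y1 (fun ω => (V1 ω, U ω))
    Δ1 + Δ2 = Θ1 + Θ2 ∧ min (Δ1 + Θ2) (Δ2 + Θ1) ≤ Δ1 + Δ2 :=
  sum_rate_bounds_identity_and_min_general p U V1 V2 Y1 Y2
end

section
/- Let W1, V1, V2, U, Y2 be random variables defined on a common finite probability space, and suppose the Markov chain condition I(W1; Y2 | V1, V2, U) = 0 holds. Then H(W1|Y2) ≥ H(V1|V2,U) − H(V1 | Y2, V2, U, W1) − I(V1; Y2 | V2, U). -/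
open scoped BigOperators

/-!
Since `H(V1|V2,U) - I(V1;Y2|V2,U) = H(V1|Y2,V2,U)`, the right-hand side of the bound is
`I(V1;W1|Y2,V2,U)`. A conditional mutual information is at most the conditional entropy of either
argument, here `H(W1|Y2,V2,U)`, and conditioning on less never decreases entropy.
-/

section

variable {Ω α β γ : Type*} [Fintype Ω] [Fintype α] [Fintype β] [Fintype γ] {p : Ω → ℝ}

theorem sum_pm_mul (p : Ω → ℝ) (X : Ω → α) (f : α → ℝ) :
    ∑ x, pm p X x * f x = ∑ ω, p ω * f (X ω) := by
  classical
  simp only [pm, Finset.sum_mul, ite_mul, zero_mul]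
  rw [Finset.sum_comm]
  simp only [Finset.sum_ite_eq, Finset.mem_univ, if_true]

theorem sum_pm (p : Ω → ℝ) (X : Ω → α) : ∑ x, pm p X x = ∑ ω, p ω := by
  simpa only [mul_one] using sum_pm_mul p X fun _ ↦ 1

theorem sum_pm_prodMk (p : Ω → ℝ) (X : Ω → α) (Y : Ω → β) (y : β) :
    ∑ x, pm p (fun ω ↦ (X ω, Y ω)) (x, y) = pm p Y y := by
  classical
  simp only [pm, Prod.mk.injEq, ite_and]
  rw [Finset.sum_comm]
  simp only [Finset.sum_ite_eq, Finset.mem_univ, if_true]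

theorem pm_nonneg (hp : ∀ ω, 0 ≤ p ω) (X : Ω → α) (x : α) : 0 ≤ pm p X x := by
  classical
  exact Finset.sum_nonneg fun ω _ ↦ ite_nonneg (hp ω) le_rfl

theorem pm_pos (hp : ∀ ω, 0 ≤ p ω) (X : Ω → α) {ω : Ω} (hω : 0 < p ω) : 0 < pm p X (X ω) := by
  classical
  exact Finset.sum_pos' (fun ω' _ ↦ ite_nonneg (hp ω') le_rfl)
    ⟨ω, Finset.mem_univ ω, by rwa [if_pos rfl]⟩

theorem exists_pos_of_pm_ne_zero (hp : ∀ ω, 0 ≤ p ω) {X : Ω → α} {x : α} (hx : pm p X x ≠ 0) :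
    ∃ ω, 0 < p ω ∧ X ω = x := by
  classical
  obtain ⟨ω, -, hω⟩ := Finset.exists_ne_zero_of_sum_ne_zero hx
  obtain ⟨hX, hpω⟩ := ite_ne_right_iff.mp hω
  exact ⟨ω, (hp ω).lt_of_ne' hpω, hX⟩

theorem pm_le_pm_of_factorsThrough (hp : ∀ ω, 0 ≤ p ω) {X : Ω → α} {Y : Ω → β}
    (h : X.FactorsThrough Y) (ω : Ω) : pm p Y (Y ω) ≤ pm p X (X ω) := by
  classical
  refine Finset.sum_le_sum fun ω' _ ↦ ?_
  by_cases hY : Y ω' = Y ω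
  · rw [if_pos hY, if_pos (h hY)]
  · rw [if_neg hY]
    exact ite_nonneg (hp ω') le_rfl

theorem ent_eq_neg_sum (p : Ω → ℝ) (X : Ω → α) :
    ent p X = -∑ ω, p ω * Real.log (pm p X (X ω)) := by
  rw [ent, Finset.sum_neg_distrib, sum_pm_mul p X fun x ↦ Real.log (pm p X x)]

theorem ent_le_ent_of_factorsThrough (hp : ∀ ω, 0 ≤ p ω) {X : Ω → α} {Y : Ω → β}
    (h : X.FactorsThrough Y) : ent p X ≤ ent p Y := by
  rw [ent_eq_neg_sum, ent_eq_neg_sum, neg_le_neg_iff]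
  refine Finset.sum_le_sum fun ω _ ↦ ?_
  rcases (hp ω).eq_or_lt with hω | hω
  · rw [← hω, zero_mul, zero_mul]
  · exact mul_le_mul_of_nonneg_left
      (Real.log_le_log (pm_pos hp Y hω) (pm_le_pm_of_factorsThrough hp h ω)) hω.le

theorem gibbs_inequality {P Q : α → ℝ} (hP : ∀ x, 0 ≤ P x) (hQ : ∀ x, 0 ≤ Q x)
    (hPQ : ∀ x, P x ≠ 0 → Q x ≠ 0) (hsum : ∑ x, Q x ≤ ∑ x, P x) :
    ∑ x, P x * Real.log (Q x) ≤ ∑ x, P x * Real.log (P x) := by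
  have pointwise (x : α) : P x * Real.log (Q x) - P x * Real.log (P x) ≤ Q x - P x := by
    rcases (hP x).eq_or_lt with hx | hx
    · simpa [← hx] using hQ x
    · calc
        P x * Real.log (Q x) - P x * Real.log (P x) = P x * Real.log (Q x / P x) := by
          rw [Real.log_div (hPQ x hx.ne') hx.ne', mul_sub]
        _ ≤ P x * (Q x / P x - 1) := by
          gcongr
          exact Real.log_le_sub_one_of_pos (div_pos ((hQ x).lt_of_ne' (hPQ x hx.ne')) hx)
        _ = Q x - P x := by field_simp
  have total := Finset.sum_le_sum fun x (_ : x ∈ Finset.univ) ↦ pointwise x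
  simp only [Finset.sum_sub_distrib] at total
  linarith

/-- The law on `α × β × γ` with the same `(X, Z)` and `(Y, Z)` marginals as `p`, under which `X` and
`Y` are conditionally independent given `Z`. The junk value `x / 0 = 0` gives it mass zero wherever
`Z` has mass zero. -/
noncomputable def condIndepLaw (p : Ω → ℝ) (X : Ω → α) (Y : Ω → β) (Z : Ω → γ) :
    α × β × γ → ℝ := fun t ↦
  pm p (fun ω ↦ (X ω, Z ω)) (t.1, t.2.2) * pm p (fun ω ↦ (Y ω, Z ω)) t.2 / pm p Z t.2.2

theorem condIndepLaw_nonneg (hp : ∀ ω, 0 ≤ p ω) (X : Ω → α) (Y : Ω → β) (Z : Ω → γ)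
    (t : α × β × γ) : 0 ≤ condIndepLaw p X Y Z t :=
  div_nonneg (mul_nonneg (pm_nonneg hp _ _) (pm_nonneg hp _ _)) (pm_nonneg hp _ _)

theorem condIndepLaw_pos (hp : ∀ ω, 0 ≤ p ω) (X : Ω → α) (Y : Ω → β) (Z : Ω → γ) {ω : Ω}
    (hω : 0 < p ω) : 0 < condIndepLaw p X Y Z (X ω, Y ω, Z ω) :=
  div_pos (mul_pos (pm_pos hp (fun ω ↦ (X ω, Z ω)) hω) (pm_pos hp (fun ω ↦ (Y ω, Z ω)) hω))
    (pm_pos hp Z hω)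

theorem sum_condIndepLaw (p : Ω → ℝ) (X : Ω → α) (Y : Ω → β) (Z : Ω → γ) :
    ∑ t, condIndepLaw p X Y Z t = ∑ ω, p ω := by
  simp only [condIndepLaw, Fintype.sum_prod_type_right, ← Finset.sum_div, ← Finset.sum_mul,
    ← Finset.mul_sum, sum_pm_prodMk, mul_self_div_self, sum_pm]

theorem sum_mul_log_condIndepLaw (hp : ∀ ω, 0 ≤ p ω) (X : Ω → α) (Y : Ω → β) (Z : Ω → γ) :
    ∑ ω, p ω * Real.log (condIndepLaw p X Y Z (X ω, Y ω, Z ω)) =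
      ent p Z - ent p (fun ω ↦ (X ω, Z ω)) - ent p (fun ω ↦ (Y ω, Z ω)) := by
  have pointwise (ω : Ω) : p ω * Real.log (condIndepLaw p X Y Z (X ω, Y ω, Z ω)) =
      p ω * Real.log (pm p (fun ω ↦ (X ω, Z ω)) (X ω, Z ω)) +
        p ω * Real.log (pm p (fun ω ↦ (Y ω, Z ω)) (Y ω, Z ω)) -
        p ω * Real.log (pm p Z (Z ω)) := by
    rcases (hp ω).eq_or_lt with hω | hω
    · simp only [← hω, zero_mul, add_zero, sub_zero]
    · have hXZ := (pm_pos hp (fun ω ↦ (X ω, Z ω)) hω).ne'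
      have hYZ := (pm_pos hp (fun ω ↦ (Y ω, Z ω)) hω).ne'
      rw [condIndepLaw, Real.log_div (mul_ne_zero hXZ hYZ) (pm_pos hp Z hω).ne',
        Real.log_mul hXZ hYZ]
      ring
  simp only [pointwise, ent_eq_neg_sum, Finset.sum_sub_distrib, Finset.sum_add_distrib]
  ring

theorem condMutI_nonneg (hp : ∀ ω, 0 ≤ p ω) (X : Ω → α) (Y : Ω → β) (Z : Ω → γ) :
    0 ≤ condMutI p X Y Z := by
  let T : Ω → α × β × γ := fun ω ↦ (X ω, Y ω, Z ω)
  have support (t : α × β × γ) (ht : pm p T t ≠ 0) : condIndepLaw p X Y Z t ≠ 0 := by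
    obtain ⟨ω, hω, rfl⟩ := exists_pos_of_pm_ne_zero hp ht
    exact (condIndepLaw_pos hp X Y Z hω).ne'
  have gibbs := gibbs_inequality (pm_nonneg hp T) (condIndepLaw_nonneg hp X Y Z) support
    (by rw [sum_condIndepLaw, sum_pm])
  rw [sum_pm_mul p T fun t ↦ Real.log (condIndepLaw p X Y Z t), sum_mul_log_condIndepLaw hp,
    sum_pm_mul p T fun t ↦ Real.log (pm p T t)] at gibbs
  have entropy := ent_eq_neg_sum p T
  simp only [condMutI, condEnt]
  linarith

theorem condMutI_le_condEnt_right (hp : ∀ ω, 0 ≤ p ω) (X : Ω → α) (Y : Ω → β) (Z : Ω → γ) :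
    condMutI p X Y Z ≤ condEnt p Y Z := by
  have mono : ent p (fun ω ↦ (X ω, Z ω)) ≤ ent p (fun ω ↦ (X ω, Y ω, Z ω)) :=
    ent_le_ent_of_factorsThrough hp fun _ _ h ↦ by simp_all
  simp only [condMutI, condEnt]
  linarith

theorem condEnt_le_condEnt_of_factorsThrough (hp : ∀ ω, 0 ≤ p ω) (X : Ω → α) {Y : Ω → β}
    {Z : Ω → γ} (h : Y.FactorsThrough Z) : condEnt p X Z ≤ condEnt p X Y := by
  have joint : ent p (fun ω ↦ (X ω, Z ω)) ≤ ent p (fun ω ↦ (X ω, Z ω, Y ω)) :=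
    ent_le_ent_of_factorsThrough hp fun _ _ hXZY ↦ by simp_all
  have redundant : ent p (fun ω ↦ (Z ω, Y ω)) ≤ ent p Z :=
    ent_le_ent_of_factorsThrough hp fun _ _ hZ ↦ Prod.ext hZ (h hZ)
  have nonneg := condMutI_nonneg hp X Z Y
  simp only [condMutI, condEnt] at nonneg ⊢
  linarith

end

theorem equivocation_lower_bound_general
    {Ω αW α1 α2 αU β2 : Type*} [Fintype Ω] [Fintype αW] [Fintype α1] [Fintype α2]
    [Fintype αU] [Fintype β2] {p : Ω → ℝ} (hp : ∀ ω, 0 ≤ p ω)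
    (W1 : Ω → αW) (V1 : Ω → α1) (V2 : Ω → α2) (U : Ω → αU) (Y2 : Ω → β2) :
    condEnt p V1 (fun ω ↦ (V2 ω, U ω))
        - condEnt p V1 (fun ω ↦ (Y2 ω, V2 ω, U ω, W1 ω))
        - condMutI p V1 Y2 (fun ω ↦ (V2 ω, U ω))
      ≤ condEnt p W1 Y2 := by
  let S : Ω → β2 × α2 × αU := fun ω ↦ (Y2 ω, V2 ω, U ω)
  calc
    _ = condEnt p V1 S - condEnt p V1 (fun ω ↦ (Y2 ω, V2 ω, U ω, W1 ω)) := by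
      rw [condMutI]
      ring
    _ ≤ condEnt p V1 S - condEnt p V1 (fun ω ↦ (W1 ω, S ω)) := by
      gcongr
      exact condEnt_le_condEnt_of_factorsThrough hp V1 fun _ _ h ↦ by simp_all [S]
    _ = condMutI p V1 W1 S := rfl
    _ ≤ condEnt p W1 S := condMutI_le_condEnt_right hp V1 W1 S
    _ ≤ condEnt p W1 Y2 :=
      condEnt_le_condEnt_of_factorsThrough hp W1 fun _ _ h ↦ congrArg Prod.fst h

/-- The equivocation lower bound (equations (ev02)–(ev0-IB)): if the Markov chain
condition `I(W1;Y2|V1,V2,U) = 0` holds, then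
`H(W1|Y2) ≥ H(V1|V2,U) − H(V1|Y2,V2,U,W1) − I(V1;Y2|V2,U)`. -/
theorem equivocation_lower_bound
    {Ω αW α1 α2 αU β2 : Type*} [Fintype Ω] [Fintype αW] [Fintype α1] [Fintype α2]
    [Fintype αU] [Fintype β2]
    (p : Ω → ℝ) (hp : ∀ ω, 0 ≤ p ω) (hp1 : ∑ ω, p ω = 1)
    (W1 : Ω → αW) (V1 : Ω → α1) (V2 : Ω → α2) (U : Ω → αU) (Y2 : Ω → β2)
    (hMarkov : condMutI p W1 Y2 (fun ω => (V1 ω, V2 ω, U ω)) = 0) :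
    condEnt p W1 Y2
      ≥ condEnt p V1 (fun ω => (V2 ω, U ω))
        - condEnt p V1 (fun ω => (Y2 ω, V2 ω, U ω, W1 ω))
        - condMutI p V1 Y2 (fun ω => (V2 ω, U ω)) :=
  equivocation_lower_bound_general hp W1 V1 V2 U Y2
end
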